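/- Let ABC be a triangle with side lengths a < b < c. Then every minimum area isosceles container for ABC equals (as a convex set) one of the three triangles AB'C, ABC', AB₁C. In particular, ABC has at most 3 distinct minimum area isosceles containers, and every minimum area isosceles container is a special container of the first or the second kind. -/

import Mathlib

open EuclideanGeometry MeasureTheory Real

noncomputable section

/-- The Euclidean plane. -/
abbrev Pt : Type := EuclideanSpace ℝ (Fin 2)

/-- The closed triangular region with vertices `A`, `B`, `C`
(the convex hull of the three vertices). -/
def tri (A B C : Pt) : Set Pt := convexHull ℝ {A, B, C}

/-- The area of the triangle `A B C`:
the 2-dimensional Lebesgue measure of its convex hull. -/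
def triArea (A B C : Pt) : ℝ := (volume (tri A B C)).toReal

/-- A triangle is isosceles if at least two of its side lengths coincide. -/
def IsIsosceles (A B C : Pt) : Prop :=
  dist B C = dist C A ∨ dist C A = dist A B ∨ dist A B = dist B C

/-- `S P R` is an isosceles container for the triangle `A B C`:
it is a genuine isosceles triangle whose convex hull contains that of `A B C`. -/
def IsIsoscelesContainer (A B C S P R : Pt) : Prop :=
  AffineIndependent ℝ ![S, P, R] ∧ IsIsosceles S P R ∧ tri A B C ⊆ tri S P R

/-- `S P R` is a minimum area isosceles container for the triangle `A B C`. -/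
def IsMinIsoscelesContainer (A B C S P R : Pt) : Prop :=
  IsIsoscelesContainer A B C S P R ∧
    ∀ S' P' R' : Pt, IsIsoscelesContainer A B C S' P' R' →
      triArea S P R ≤ triArea S' P' R'

/-- `Z` lies on the ray starting at `X` passing through `Y`. -/
def OnRay (X Y Z : Pt) : Prop := SameRay ℝ (Y - X) (Z - X)

/-!
Let `K` be a minimal container of a scalene triangle `T`. No similarity of ratio greater than `1`
maps `T` into `K`, since otherwise a smaller copy of `K` would contain `T`. Plane similarities have
four degrees of freedom, so if every side of `K` carried only one vertex of `T`, the three contacts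
could be respected to first order by a motion that does not shrink `T`; hence some side of `K`
contains a side of `T`.

Comparing `K` with the isosceles triangles that arise from `T` by extending a single side of `T`
then shows that `K` is itself such an extension. Of the finitely many isosceles extensions, all but
three are larger than another one.
-/

section Area

lemma range_fin_three {α : Type*} (f : Fin 3 → α) : Set.range f = {f 0, f 1, f 2} := by
  ext
  simp [Fin.exists_fin_succ, eq_comm]

lemma affineSpan_eq_top_iff_affineIndependent {X Y Z : Pt} :
    affineSpan ℝ {X, Y, Z} = ⊤ ↔ AffineIndependent ℝ ![X, Y, Z] := by
  have range_eq : Set.range ![X, Y, Z] = {X, Y, Z} := range_fin_three _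
  rw [affineIndependent_iff_finrank_vectorSpan_eq ℝ _ (n := 2) rfl, range_eq,
    ← AffineSubspace.direction_eq_top_iff_of_nonempty ((affineSpan_nonempty ℝ).2 (by simp)),
    direction_affineSpan]
  refine ⟨fun htop => ?_, fun hrank => Submodule.eq_top_of_finrank_eq ?_⟩
  · rw [htop, finrank_top, finrank_euclideanSpace_fin]
  · rw [hrank, finrank_euclideanSpace_fin]

lemma affineIndependent_iff_triArea_pos {X Y Z : Pt} :
    AffineIndependent ℝ ![X, Y, Z] ↔ 0 < triArea X Y Z := by
  rw [← affineSpan_eq_top_iff_affineIndependent]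
  have volume_lt_top : volume (tri X Y Z) < ⊤ :=
    ((Set.toFinite {X, Y, Z}).isCompact_convexHull ℝ).measure_lt_top
  refine ⟨fun htop => ENNReal.toReal_pos ?_ volume_lt_top.ne, fun hpos => ?_⟩
  · exact (Measure.measure_pos_of_nonempty_interior _
      (interior_convexHull_nonempty_iff_affineSpan_eq_top.2 htop)).ne'
  · by_contra hne
    have volume_eq_zero : volume (tri X Y Z) = 0 :=
      measure_mono_null (convexHull_subset_affineSpan _) (Measure.addHaar_affineSubspace _ _ hne)
    simp [triArea, volume_eq_zero] at hpos

open scoped Pointwise in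
lemma tri_add_map (f : Pt →ₗ[ℝ] Pt) (v X Y Z : Pt) :
    tri (v + f X) (v + f Y) (v + f Z) = v +ᵥ f '' tri X Y Z := by
  simp only [tri, f.image_convexHull, ← convexHull_vadd, Set.image_insert_eq,
    Set.image_singleton, Set.vadd_set_insert, Set.vadd_set_singleton, vadd_eq_add]

lemma triArea_add_map (f : Pt →ₗ[ℝ] Pt) (v X Y Z : Pt) :
    triArea (v + f X) (v + f Y) (v + f Z) = |LinearMap.det f| * triArea X Y Z := by
  rw [triArea, tri_add_map, measure_vadd, Measure.addHaar_image_linearMap, ENNReal.toReal_mul,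
    ENNReal.toReal_ofReal (abs_nonneg _), triArea]

/-- The determinant of two plane vectors, used to compare areas in coordinates. -/
def cross (u v : Pt) : ℝ := u 0 * v 1 - u 1 * v 0

lemma triArea_eq_abs_cross_mul (X Y Z : Pt) :
    triArea X Y Z = |cross (Y - X) (Z - X)| * triArea 0 !₂[1, 0] !₂[0, 1] := by
  have h := triArea_add_map (Matrix.toLpLin 2 2 !![(Y - X) 0, (Z - X) 0; (Y - X) 1, (Z - X) 1]) X
    0 !₂[1, 0] !₂[0, 1]
  rw [LinearMap.det_toLpLin, Matrix.det_fin_two_of, mul_comm ((Z - X) 0)] at h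
  rw [cross, ← h]
  congr 1 <;> ext i <;> fin_cases i <;> simp

lemma triArea_frame (S P R : Pt) (x y β γ : ℝ) :
    triArea (S + x • (P - S)) (S + y • (P - S)) (S + β • (P - S) + γ • (R - S)) =
      |(y - x) * γ| * triArea S P R := by
  rw [triArea_eq_abs_cross_mul, triArea_eq_abs_cross_mul S P R, ← mul_assoc, ← abs_mul]
  congr 2
  simp only [cross, PiLp.add_apply, PiLp.sub_apply, PiLp.smul_apply, smul_eq_mul]
  ring

lemma triArea_add_smul_sub (X Y Z : Pt) (r : ℝ) :
    triArea X Y (X + r • (Z - X)) = |r| * triArea X Y Z := by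
  simpa using triArea_frame X Y Z 0 1 0 r

end Area

section Relabelling

variable {A B C X Y Z S P R S' P' R' : Pt}

lemma eq_relabelling_of_triple_eq {α : Type*} {a b c x y z : α} (hab : a ≠ b) (hac : a ≠ c)
    (hbc : b ≠ c) (h : ({a, b, c} : Set α) = {x, y, z}) :
    (x = a ∧ y = b ∧ z = c) ∨ (x = a ∧ y = c ∧ z = b) ∨ (x = b ∧ y = a ∧ z = c) ∨
      (x = b ∧ y = c ∧ z = a) ∨ (x = c ∧ y = a ∧ z = b) ∨ (x = c ∧ y = b ∧ z = a) := by
  have ha : a ∈ ({x, y, z} : Set α) := h ▸ by simp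
  have hb : b ∈ ({x, y, z} : Set α) := h ▸ by simp
  have hc : c ∈ ({x, y, z} : Set α) := h ▸ by simp
  simp only [Set.mem_insert_iff, Set.mem_singleton_iff] at ha hb hc
  grind

lemma ne_of_affineIndependent_three (h : AffineIndependent ℝ ![X, Y, Z]) :
    X ≠ Y ∧ X ≠ Z ∧ Y ≠ Z :=
  ⟨h.injective.ne (a₁ := 0) (a₂ := 1) (by decide), h.injective.ne (a₁ := 0) (a₂ := 2) (by decide),
    h.injective.ne (a₁ := 1) (a₂ := 2) (by decide)⟩

lemma triArea_congr (h : ({A, B, C} : Set Pt) = {X, Y, Z}) : triArea A B C = triArea X Y Z := by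
  simp only [triArea, tri, h]

lemma affineIndependent_congr (h : ({A, B, C} : Set Pt) = {X, Y, Z})
    (hT : AffineIndependent ℝ ![A, B, C]) : AffineIndependent ℝ ![X, Y, Z] := by
  rwa [affineIndependent_iff_triArea_pos, ← triArea_congr h, ← affineIndependent_iff_triArea_pos]

lemma IsIsosceles.congr (hiso : IsIsosceles S P R) (hind : AffineIndependent ℝ ![S, P, R])
    (h : ({S, P, R} : Set Pt) = {S', P', R'}) : IsIsosceles S' P' R' := by
  obtain ⟨hSP, hSR, hPR⟩ := ne_of_affineIndependent_three hind
  unfold IsIsosceles at hiso ⊢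
  rcases eq_relabelling_of_triple_eq hSP hSR hPR h with
    ⟨rfl, rfl, rfl⟩ | ⟨rfl, rfl, rfl⟩ | ⟨rfl, rfl, rfl⟩ | ⟨rfl, rfl, rfl⟩ | ⟨rfl, rfl, rfl⟩ |
    ⟨rfl, rfl, rfl⟩ <;>
  grind [dist_comm]

lemma IsIsoscelesContainer.congr (h : IsIsoscelesContainer A B C S P R)
    (hT : ({A, B, C} : Set Pt) = {X, Y, Z}) (hK : ({S, P, R} : Set Pt) = {S', P', R'}) :
    IsIsoscelesContainer X Y Z S' P' R' := by
  obtain ⟨hind, hiso, hsub⟩ := h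
  refine ⟨affineIndependent_congr hK hind, hiso.congr hind hK, ?_⟩
  rwa [tri, tri, ← hT, ← hK]

lemma IsMinIsoscelesContainer.congr (h : IsMinIsoscelesContainer A B C S P R)
    (hT : ({A, B, C} : Set Pt) = {X, Y, Z}) (hK : ({S, P, R} : Set Pt) = {S', P', R'}) :
    IsMinIsoscelesContainer X Y Z S' P' R' :=
  ⟨h.1.congr hT hK, fun _ _ _ h' => triArea_congr hK ▸ h.2 _ _ _ (h'.congr hT.symm rfl)⟩

end Relabelling

section Extension

variable {X Y Z : Pt} {r : ℝ}

lemma dist_add_smul_sub (X Z : Pt) (hr : 0 ≤ r) :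
    dist X (X + r • (Z - X)) = r * dist X Z := by
  rw [dist_self_add_right, norm_smul, Real.norm_of_nonneg hr, dist_eq_norm_sub']

lemma dist_sq_add_smul_sub (X Y Z : Pt) (r : ℝ) : dist Y (X + r • (Z - X)) ^ 2 =
    (1 - r) * dist X Y ^ 2 + r * dist Y Z ^ 2 - r * (1 - r) * dist X Z ^ 2 := by
  simp only [EuclideanSpace.dist_sq_eq, Fin.sum_univ_two, Real.dist_eq, sq_abs, PiLp.add_apply,
    PiLp.smul_apply, PiLp.sub_apply, smul_eq_mul]
  ring

lemma isIsosceles_extension_iff (X Y Z : Pt) (hr : 0 < r) :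
    IsIsosceles X Y (X + r • (Z - X)) ↔
      r * dist X Z = dist X Y ∨
      r * dist X Z ^ 2 = dist X Y ^ 2 + dist X Z ^ 2 - dist Y Z ^ 2 ∨
      dist X Y ^ 2 = r * (dist X Y ^ 2 + dist X Z ^ 2 - dist Y Z ^ 2) := by
  have apex_X : dist (X + r • (Z - X)) X = dist X Y ↔ r * dist X Z = dist X Y := by
    rw [dist_comm, dist_add_smul_sub X Z hr.le]
  have apex_Y : dist X Y = dist Y (X + r • (Z - X)) ↔
      r * dist X Z ^ 2 = dist X Y ^ 2 + dist X Z ^ 2 - dist Y Z ^ 2 := by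
    rw [← sq_eq_sq₀ dist_nonneg dist_nonneg, dist_sq_add_smul_sub]
    exact ⟨fun h => mul_left_cancel₀ hr.ne' (by linarith), fun h => by linear_combination -r * h⟩
  have apex_Z : dist Y (X + r • (Z - X)) = dist (X + r • (Z - X)) X ↔
      dist X Y ^ 2 = r * (dist X Y ^ 2 + dist X Z ^ 2 - dist Y Z ^ 2) := by
    rw [← sq_eq_sq₀ dist_nonneg dist_nonneg, dist_sq_add_smul_sub, dist_comm _ X,
      dist_add_smul_sub X Z hr.le]
    constructor <;> intro h <;> linarith
  rw [IsIsosceles, apex_X, apex_Y, apex_Z]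
  tauto

lemma tri_subset_tri_extension (hr : 1 ≤ r) : tri X Y Z ⊆ tri X Y (X + r • (Z - X)) := by
  have r_pos : 0 < r := by linarith
  have vertices_subset : {X, Y, X + r • (Z - X)} ⊆ tri X Y (X + r • (Z - X)) :=
    subset_convexHull ℝ _
  have hX : X ∈ tri X Y (X + r • (Z - X)) := vertices_subset (by simp)
  have hY : Y ∈ tri X Y (X + r • (Z - X)) := vertices_subset (by simp)
  have hZ : Z ∈ tri X Y (X + r • (Z - X)) := by
    refine (convex_convexHull ℝ _).segment_subset hX (vertices_subset (by simp) :
      X + r • (Z - X) ∈ _) ?_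
    rw [segment_eq_image']
    exact ⟨r⁻¹, ⟨by positivity, inv_le_one_of_one_le₀ hr⟩, by simp [smul_smul, r_pos.ne']⟩
  exact convexHull_min (Set.insert_subset hX (Set.pair_subset hY hZ)) (convex_convexHull ℝ _)

/-- The inequalities saying that no isosceles extension of a triangle `X Y Z` beyond `Z` on the ray
`X Z` has area less than `1 / τ` times that of the triangle, in terms of the squared side lengths.
The fields correspond to extensions with `XY` as a leg from the apex `X`, as a leg from the apex
`Y`, and as the base, respectively. -/
structure ExtensionBounds (τ xy xz yz : ℝ) : Prop where
  apex_fst : xz ≤ xy → xz ≤ τ ^ 2 * xy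
  apex_snd : yz ≤ xy → xz ≤ τ * (xy + xz - yz)
  apex_trd : xz ≤ yz → xy + xz - yz ≤ τ * xy

lemma ExtensionBounds.of_mul {τ xy xz yz k : ℝ} (hk : 0 < k)
    (h : ExtensionBounds τ (k * xy) (k * xz) (k * yz)) : ExtensionBounds τ xy xz yz where
  apex_fst hle := le_of_mul_le_mul_left
    (by linarith [h.apex_fst (mul_le_mul_of_nonneg_left hle hk.le)]) hk
  apex_snd hle := le_of_mul_le_mul_left
    (by linarith [h.apex_snd (mul_le_mul_of_nonneg_left hle hk.le)]) hk
  apex_trd hle := le_of_mul_le_mul_left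
    (by linarith [h.apex_trd (mul_le_mul_of_nonneg_left hle hk.le)]) hk

lemma IsMinIsoscelesContainer.one_le_mul_of_isIsosceles {S P R : Pt}
    (h : IsMinIsoscelesContainer X Y Z S P R) (hT : AffineIndependent ℝ ![X, Y, Z]) (hr : 1 ≤ r)
    (hiso : IsIsosceles X Y (X + r • (Z - X))) :
    1 ≤ r * (triArea X Y Z / triArea S P R) := by
  have r_pos : 0 < r := by linarith
  have area_eq : triArea X Y (X + r • (Z - X)) = r * triArea X Y Z := by
    rw [triArea_add_smul_sub, abs_of_pos r_pos]
  have area_pos : 0 < triArea X Y (X + r • (Z - X)) :=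
    area_eq ▸ mul_pos r_pos (affineIndependent_iff_triArea_pos.1 hT)
  rw [← mul_div_assoc, ← area_eq, one_le_div (affineIndependent_iff_triArea_pos.1 h.1.1)]
  exact h.2 _ _ _
    ⟨affineIndependent_iff_triArea_pos.2 area_pos, hiso, tri_subset_tri_extension hr⟩

lemma IsMinIsoscelesContainer.extensionBounds {S P R : Pt}
    (h : IsMinIsoscelesContainer X Y Z S P R) (hT : AffineIndependent ℝ ![X, Y, Z]) :
    ExtensionBounds (triArea X Y Z / triArea S P R)
      (dist X Y ^ 2) (dist X Z ^ 2) (dist Y Z ^ 2) := by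
  obtain ⟨hXY, hXZ, -⟩ := ne_of_affineIndependent_three hT
  have XY_pos : 0 < dist X Y := dist_pos.2 hXY
  have XZ_pos : 0 < dist X Z := dist_pos.2 hXZ
  have τ_nonneg : 0 ≤ triArea X Y Z / triArea S P R :=
    div_nonneg ENNReal.toReal_nonneg ENNReal.toReal_nonneg
  have bound {u v : ℝ} (hv : 0 < v) (hvu : v ≤ u) (hiso : IsIsosceles X Y (X + (u / v) • (Z - X))) :
      v ≤ triArea X Y Z / triArea S P R * u := by
    have := h.one_le_mul_of_isIsosceles hT ((one_le_div hv).2 hvu) hiso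
    rwa [div_mul_eq_mul_div, one_le_div hv, mul_comm] at this
  refine ⟨fun hle => ?_, fun hle => ?_, fun hle => ?_⟩
  · have XZ_le : dist X Z ≤ dist X Y := (sq_le_sq₀ XZ_pos.le XY_pos.le).1 hle
    rw [← mul_pow]
    refine pow_le_pow_left₀ XZ_pos.le (bound XZ_pos XZ_le ?_) 2
    exact (isIsosceles_extension_iff X Y Z (by positivity)).2 (Or.inl (by field_simp))
  · refine bound (by positivity) (by linarith) ?_
    have num_pos : 0 < dist X Y ^ 2 + dist X Z ^ 2 - dist Y Z ^ 2 := by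
      linarith [pow_pos XZ_pos 2]
    exact (isIsosceles_extension_iff X Y Z (by positivity)).2 (Or.inr (Or.inl (by field_simp)))
  · rcases le_or_gt (dist X Y ^ 2 + dist X Z ^ 2 - dist Y Z ^ 2) 0 with den_nonpos | den_pos
    · exact den_nonpos.trans (by positivity)
    · refine bound den_pos (by linarith) ?_
      exact (isIsosceles_extension_iff X Y Z (by positivity)).2 (Or.inr (Or.inr (by field_simp)))

end Extension

section Spiral

variable {A B C S P R : Pt}

/-- Multiplication by a complex number, as a linear map of the plane: the rotation and scaling with
fixed point `0`. The maps `z ↦ v + spiral w z` are the orientation preserving similarities. -/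
def spiral : ℂ →ₐ[ℝ] Module.End ℝ Pt :=
  (Complex.orthonormalBasisOneI.repr.toLinearEquiv.conjAlgEquiv ℝ).toAlgHom.comp
    (Algebra.lmul ℝ ℂ)

lemma spiral_apply (w : ℂ) (z : Pt) : spiral w z =
    Complex.orthonormalBasisOneI.repr (w * Complex.orthonormalBasisOneI.repr.symm z) := rfl

lemma det_spiral (w : ℂ) : LinearMap.det (spiral w) = ‖w‖ ^ 2 := by
  rw [← Complex.normSq_eq_norm_sq, ← Algebra.norm_complex_apply]
  exact LinearMap.det_conj (Algebra.lmul ℝ ℂ w) Complex.orthonormalBasisOneI.repr.toLinearEquiv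

lemma dist_add_spiral (w : ℂ) (v X Y : Pt) :
    dist (v + spiral w X) (v + spiral w Y) = ‖w‖ * dist X Y := by
  rw [dist_add_left, dist_eq_norm, ← map_sub, spiral_apply, LinearIsometryEquiv.norm_map,
    norm_mul, LinearIsometryEquiv.norm_map, dist_eq_norm]

lemma spiral_inv_apply_spiral {w : ℂ} (hw : w ≠ 0) (z : Pt) : spiral w⁻¹ (spiral w z) = z := by
  rw [← Module.End.mul_apply, ← map_mul, inv_mul_cancel₀ hw, map_one, Module.End.one_apply]

lemma IsIsoscelesContainer.add_spiral {w : ℂ} (hw : w ≠ 0) (h : IsIsoscelesContainer A B C S P R)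
    (v : Pt) :
    IsIsoscelesContainer (v + spiral w A) (v + spiral w B) (v + spiral w C)
      (v + spiral w S) (v + spiral w P) (v + spiral w R) := by
  obtain ⟨hind, hiso, hsub⟩ := h
  refine ⟨?_, ?_, ?_⟩
  · rw [affineIndependent_iff_triArea_pos] at hind ⊢
    rw [triArea_add_map, det_spiral]
    positivity
  · simpa only [IsIsosceles, dist_add_spiral, mul_right_inj' (norm_ne_zero_iff.2 hw)] using hiso
  · rw [tri_add_map, tri_add_map]
    exact Set.vadd_set_mono (Set.image_mono hsub)

lemma IsMinIsoscelesContainer.norm_le_one (h : IsMinIsoscelesContainer A B C S P R) {w : ℂ}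
    {v : Pt} (hmaps : ∀ z ∈ ({A, B, C} : Set Pt), v + spiral w z ∈ tri S P R) : ‖w‖ ≤ 1 := by
  by_contra! one_lt
  have hw : w ≠ 0 := norm_pos_iff.1 (by linarith)
  have image_subset : tri (v + spiral w A) (v + spiral w B) (v + spiral w C) ⊆ tri S P R := by
    refine convexHull_min ?_ (convex_convexHull ℝ _)
    rintro _ (rfl | rfl | rfl)
    exacts [hmaps _ (by simp), hmaps _ (by simp), hmaps _ (by simp)]
  have shrunk := IsIsoscelesContainer.add_spiral (inv_ne_zero hw) ⟨h.1.1, h.1.2.1, image_subset⟩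
    (-spiral w⁻¹ v)
  simp only [map_add, neg_add_cancel_left, spiral_inv_apply_spiral hw] at shrunk
  have area_le := h.2 _ _ _ shrunk
  rw [triArea_add_map, det_spiral, abs_of_nonneg (by positivity),
    le_mul_iff_one_le_left (affineIndependent_iff_triArea_pos.1 h.1.1), norm_inv] at area_le
  exact absurd area_le (not_le.2 (pow_lt_one₀ (by positivity) (inv_lt_one_of_one_lt₀ one_lt)
    two_ne_zero))

end Spiral

section Touching

open Filter Topology

variable {A B C : Pt} {b : AffineBasis (Fin 3) ℝ Pt}

lemma mem_tri_iff_coord_nonneg (b : AffineBasis (Fin 3) ℝ Pt) {z : Pt} :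
    z ∈ tri (b 0) (b 1) (b 2) ↔ ∀ i, 0 ≤ b.coord i z := by
  rw [tri, ← range_fin_three, b.convexHull_eq_nonneg_coord]
  rfl

lemma coord_add_smul (b : AffineBasis (Fin 3) ℝ Pt) (i : Fin 3) (z u : Pt) (t : ℝ) :
    b.coord i (z + t • u) = b.coord i z + t * (b.coord i).linear u := by
  rw [add_comm z, ← vadd_eq_add, AffineMap.map_vadd, map_smul, vadd_eq_add, smul_eq_mul, add_comm]

lemma eventually_add_mul_nonneg {f g : ℝ} (hf : 0 ≤ f) (hg : f = 0 → 0 ≤ g) :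
    ∀ᶠ t : ℝ in 𝓝[>] 0, 0 ≤ f + t * g := by
  rcases hf.eq_or_lt with f_eq | f_pos
  · filter_upwards [self_mem_nhdsWithin] with t ht
    rw [← f_eq, zero_add]
    exact mul_nonneg (le_of_lt ht) (hg f_eq.symm)
  · have tendsto : Tendsto (fun t : ℝ => f + t * g) (𝓝 0) (𝓝 (f + 0 * g)) :=
      (by fun_prop : Continuous fun t : ℝ => f + t * g).tendsto 0
    exact ((tendsto.eventually (lt_mem_nhds (by simpa))).filter_mono
      nhdsWithin_le_nhds).mono fun _ => le_of_lt

lemma one_lt_norm_one_add_mul {d : ℂ} (hd : d ≠ 0) (hre : 0 ≤ d.re) {t : ℝ} (ht : 0 < t) :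
    1 < ‖1 + t * d‖ := by
  have normSq_pos : 0 < t ^ 2 * Complex.normSq d :=
    mul_pos (by positivity) (Complex.normSq_pos.2 hd)
  have re_nonneg : 0 ≤ t * d.re := mul_nonneg ht.le hre
  rw [← one_lt_sq_iff₀ (norm_nonneg _), ← Complex.normSq_eq_norm_sq]
  simp only [Complex.normSq_apply, Complex.add_re, Complex.add_im, Complex.one_re, Complex.one_im,
    Complex.re_ofReal_mul, Complex.im_ofReal_mul] at normSq_pos ⊢
  linarith

/-- Otherwise, moving the triangle slightly along the vector field `z ↦ v + spiral d z` would
enlarge it inside its container. -/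
lemma IsMinIsoscelesContainer.exists_linear_coord_neg
    (h : IsMinIsoscelesContainer A B C (b 0) (b 1) (b 2)) {d : ℂ} (hd : d ≠ 0) (hre : 0 ≤ d.re)
    (v : Pt) :
    ∃ z ∈ ({A, B, C} : Set Pt), ∃ i, b.coord i z = 0 ∧
      (b.coord i).linear (v + spiral d z) < 0 := by
  by_contra! inward
  have stays_inside : ∀ᶠ t : ℝ in 𝓝[>] 0, ∀ z ∈ ({A, B, C} : Set Pt),
      ∀ i, 0 ≤ b.coord i z + t * (b.coord i).linear (v + spiral d z) := by
    refine (Set.toFinite _).eventually_all.2 fun z hz => eventually_all.2 fun i => ?_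
    refine eventually_add_mul_nonneg ?_ (inward z hz i)
    exact (mem_tri_iff_coord_nonneg b).1 (h.1.2.2 (subset_convexHull ℝ _ hz)) i
  obtain ⟨t, inside, t_pos⟩ := (stays_inside.and self_mem_nhdsWithin).exists
  refine (one_lt_norm_one_add_mul hd hre t_pos).not_ge (h.norm_le_one (v := t • v) ?_)
  intro z hz
  have moved_eq : t • v + spiral (1 + t * d) z = z + t • (v + spiral d z) := by
    rw [map_add, map_one, ← Complex.real_smul, map_smul, LinearMap.add_apply,
      Module.End.one_apply, LinearMap.smul_apply, smul_add]
    abel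
  rw [moved_eq, mem_tri_iff_coord_nonneg]
  exact fun i => coord_add_smul b i z _ t ▸ inside z hz i

lemma IsMinIsoscelesContainer.exists_coord_eq_zero
    (h : IsMinIsoscelesContainer A B C (b 0) (b 1) (b 2)) (i : Fin 3) :
    ∃ z ∈ ({A, B, C} : Set Pt), b.coord i z = 0 := by
  obtain ⟨z, hz, j, coord_eq, coord_neg⟩ :=
    h.exists_linear_coord_neg one_ne_zero zero_le_one (-b i)
  have linear_eq : (b.coord j).linear (-b i + spiral 1 z) = b.coord j z - b.coord j (b i) := by
    rw [map_one, Module.End.one_apply, neg_add_eq_sub, ← vsub_eq_sub, AffineMap.linearMap_vsub,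
      vsub_eq_sub]
  obtain rfl : j = i := by
    by_contra hne
    rw [linear_eq, coord_eq, b.coord_apply_ne hne, sub_zero] at coord_neg
    exact coord_neg.false
  exact ⟨z, hz, coord_eq⟩

lemma exists_linear_coord_eq_zero (b : AffineBasis (Fin 3) ℝ Pt) (q : Fin 3 → Pt) :
    ∃ d : ℂ, d ≠ 0 ∧ 0 ≤ d.re ∧ ∃ v : Pt, ∀ i, (b.coord i).linear (v + spiral d (q i)) = 0 := by
  let velocity : ℂ × Pt →ₗ[ℝ] Fin 3 → ℝ := LinearMap.pi fun i => (b.coord i).linear ∘ₗ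
    (LinearMap.snd ℝ ℂ Pt + LinearMap.applyₗ (q i) ∘ₗ spiral.toLinearMap ∘ₗ LinearMap.fst ℝ ℂ Pt)
  have velocity_apply (d : ℂ) (v : Pt) (i : Fin 3) :
      velocity (d, v) i = (b.coord i).linear (v + spiral d (q i)) := rfl
  have ker_ne_bot : LinearMap.ker velocity ≠ ⊥ :=
    LinearMap.ker_ne_bot_of_finrank_lt (by simp)
  obtain ⟨⟨d, v⟩, mem_ker, ne_zero⟩ := Submodule.exists_mem_ne_zero_of_ne_bot ker_ne_bot
  have fixed (i : Fin 3) : (b.coord i).linear (v + spiral d (q i)) = 0 := by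
    rw [← velocity_apply, LinearMap.mem_ker.1 mem_ker, Pi.zero_apply]
  have hd : d ≠ 0 := by
    rintro rfl
    simp only [map_zero, LinearMap.zero_apply, add_zero] at fixed
    have v_eq : v = 0 := b.ext_elem fun i => by
      simpa only [zero_add, one_smul, mul_zero, add_zero, fixed i] using coord_add_smul b i 0 v 1
    exact ne_zero (by rw [v_eq]; rfl)
  rcases le_total 0 d.re with hre | hre
  · exact ⟨d, hd, hre, v, fixed⟩
  · refine ⟨-d, neg_ne_zero.2 hd, by simpa using hre, -v, fun i => ?_⟩
    rw [map_neg, LinearMap.neg_apply, ← neg_add, map_neg, fixed, neg_zero]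

lemma IsMinIsoscelesContainer.exists_two_coord_eq_zero
    (h : IsMinIsoscelesContainer A B C (b 0) (b 1) (b 2)) :
    ∃ i, ∃ X ∈ ({A, B, C} : Set Pt), ∃ Y ∈ ({A, B, C} : Set Pt),
      X ≠ Y ∧ b.coord i X = 0 ∧ b.coord i Y = 0 := by
  choose q hq q_coord using h.exists_coord_eq_zero
  obtain ⟨d, hd, hre, v, fixed⟩ := exists_linear_coord_eq_zero b q
  obtain ⟨z, hz, i, coord_eq, coord_neg⟩ := h.exists_linear_coord_neg hd hre v
  refine ⟨i, z, hz, q i, hq i, ?_, coord_eq, q_coord i⟩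
  rintro rfl
  exact coord_neg.ne (fixed i)

end Touching

section Flush

variable {A B C S P R X Y Z : Pt} {x y β γ : ℝ}

/-- The position of a triangle `X Y Z` in a container `S P R` with the side `XY` on the side `SP`
and with all three sides of the container touched, where `X = (x, 0)`, `Y = (y, 0)` and `Z = (β, γ)`
in the frame with origin `S` and axes `P - S`, `R - S`. -/
structure FlushCoords (x y β γ : ℝ) : Prop where
  x_nonneg : 0 ≤ x
  x_lt_y : x < y
  y_le_one : y ≤ 1
  β_nonneg : 0 ≤ β
  γ_pos : 0 < γ
  β_add_γ_le_one : β + γ ≤ 1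
  touches_left : x = 0 ∨ β = 0
  touches_right : y = 1 ∨ β + γ = 1

lemma FlushCoords.reverse (h : FlushCoords x y β γ) :
    FlushCoords (1 - y) (1 - x) (1 - β - γ) γ where
  x_nonneg := by linarith [h.y_le_one]
  x_lt_y := by linarith [h.x_lt_y]
  y_le_one := by linarith [h.x_nonneg]
  β_nonneg := by linarith [h.β_add_γ_le_one]
  γ_pos := h.γ_pos
  β_add_γ_le_one := by linarith [h.β_nonneg]
  touches_left := h.touches_right.imp (by intro h; linarith) (by intro h; linarith)
  touches_right := h.touches_left.imp (by intro h; linarith) (by intro h; linarith)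

/-- The triangle `X Y Z` lies in the triangle `S P R` in the position `FlushCoords x y β γ`. -/
structure IsFlush (S P R X Y Z : Pt) (x y β γ : ℝ) : Prop extends FlushCoords x y β γ where
  fst_eq : X = S + x • (P - S)
  snd_eq : Y = S + y • (P - S)
  trd_eq : Z = S + β • (P - S) + γ • (R - S)

lemma IsFlush.reverse (h : IsFlush S P R X Y Z x y β γ) :
    IsFlush P S R Y X Z (1 - y) (1 - x) (1 - β - γ) γ where
  toFlushCoords := h.toFlushCoords.reverse
  fst_eq := by rw [h.snd_eq]; module
  snd_eq := by rw [h.fst_eq]; module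
  trd_eq := by rw [h.trd_eq]; module

lemma eq_add_coord_smul_sub (b : AffineBasis (Fin 3) ℝ Pt) (z : Pt) :
    z = b 0 + b.coord 1 z • (b 1 - b 0) + b.coord 2 z • (b 2 - b 0) := by
  have combination := b.linear_combination_coord_eq_self z
  have sum_eq := b.sum_coord_apply_eq_one z
  rw [Fin.sum_univ_three] at combination sum_eq
  rw [← eq_sub_iff_add_eq, ← eq_sub_iff_add_eq] at sum_eq
  nth_rw 1 [← combination, sum_eq]
  module

lemma IsMinIsoscelesContainer.isFlush {b : AffineBasis (Fin 3) ℝ Pt}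
    (h : IsMinIsoscelesContainer X Y Z (b 0) (b 1) (b 2)) (hT : AffineIndependent ℝ ![X, Y, Z])
    (hX : b.coord 2 X = 0) (hY : b.coord 2 Y = 0) (hXY : b.coord 1 X < b.coord 1 Y) :
    IsFlush (b 0) (b 1) (b 2) X Y Z (b.coord 1 X) (b.coord 1 Y) (b.coord 1 Z) (b.coord 2 Z) := by
  have coord_nonneg (i : Fin 3) : 0 ≤ b.coord i X ∧ 0 ≤ b.coord i Y ∧ 0 ≤ b.coord i Z := by
    have vertex_mem : ({X, Y, Z} : Set Pt) ⊆ tri (b 0) (b 1) (b 2) :=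
      (subset_convexHull ℝ _).trans h.1.2.2
    simp only [mem_tri_iff_coord_nonneg, Set.insert_subset_iff, Set.singleton_subset_iff]
      at vertex_mem
    exact ⟨vertex_mem.1 i, vertex_mem.2.1 i, vertex_mem.2.2 i⟩
  have touches (i : Fin 3) : b.coord i X = 0 ∨ b.coord i Y = 0 ∨ b.coord i Z = 0 := by
    simpa using h.exists_coord_eq_zero i
  have sum_eq_one (z : Pt) : b.coord 0 z + b.coord 1 z + b.coord 2 z = 1 := by
    simpa only [Fin.sum_univ_three] using b.sum_coord_apply_eq_one z
  have X_eq : X = b 0 + b.coord 1 X • (b 1 - b 0) := by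
    simpa only [hX, zero_smul, add_zero] using eq_add_coord_smul_sub b X
  have Y_eq : Y = b 0 + b.coord 1 Y • (b 1 - b 0) := by
    simpa only [hY, zero_smul, add_zero] using eq_add_coord_smul_sub b Y
  have Z_eq := eq_add_coord_smul_sub b Z
  have area_pos := affineIndependent_iff_triArea_pos.1 hT
  rw [X_eq, Y_eq, Z_eq, triArea_frame] at area_pos
  refine ⟨⟨(coord_nonneg 1).1, hXY, ?_, (coord_nonneg 1).2.2, ?_, ?_, ?_, ?_⟩, X_eq, Y_eq, Z_eq⟩
  · linarith [sum_eq_one Y, (coord_nonneg 0).2.1]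
  · refine (coord_nonneg 2).2.2.lt_of_ne' fun γ_eq => ?_
    rw [γ_eq, mul_zero, abs_zero, zero_mul] at area_pos
    exact area_pos.false
  · linarith [sum_eq_one Z, (coord_nonneg 0).2.2]
  · rcases touches 1 with hX1 | hY1 | hZ1
    · exact .inl hX1
    · linarith [(coord_nonneg 1).1]
    · exact .inr hZ1
  · rcases touches 0 with hX0 | hY0 | hZ0
    · linarith [sum_eq_one X, sum_eq_one Y, (coord_nonneg 0).2.1]
    · exact .inl (by linarith [sum_eq_one Y])
    · exact .inr (by linarith [sum_eq_one Z])

lemma exists_triple_eq {α : Type*} {a b c x y : α} (hx : x ∈ ({a, b, c} : Set α))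
    (hy : y ∈ ({a, b, c} : Set α)) (hxy : x ≠ y) :
    ∃ z, ({a, b, c} : Set α) = {x, y, z} := by
  rcases hx with rfl | rfl | rfl <;> rcases hy with rfl | rfl | rfl <;>
    first
    | exact absurd rfl hxy
    | exact ⟨a, by grind⟩
    | exact ⟨b, by grind⟩
    | exact ⟨c, by grind⟩

lemma IsMinIsoscelesContainer.exists_isFlush (h : IsMinIsoscelesContainer A B C S P R)
    (hT : AffineIndependent ℝ ![A, B, C]) :
    ∃ S' P' R' X Y Z x y β γ, ({S, P, R} : Set Pt) = {S', P', R'} ∧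
      ({A, B, C} : Set Pt) = {X, Y, Z} ∧ IsFlush S' P' R' X Y Z x y β γ := by
  have htop : affineSpan ℝ (Set.range ![S, P, R]) = ⊤ := by
    rw [range_fin_three]
    exact affineSpan_eq_top_iff_affineIndependent.2 h.1.1
  let b₀ : AffineBasis (Fin 3) ℝ Pt := ⟨![S, P, R], h.1.1, htop⟩
  obtain ⟨i, X, hX, Y, hY, hXY, coord_X, coord_Y⟩ :=
    IsMinIsoscelesContainer.exists_two_coord_eq_zero (b := b₀) h
  let b := b₀.reindex (Equiv.swap i 2)
  have container_eq : ({S, P, R} : Set Pt) = {b 0, b 1, b 2} := by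
    rw [← range_fin_three, AffineBasis.coe_reindex, EquivLike.range_comp, range_fin_three]
    rfl
  have coord_eq : b.coord 2 = b₀.coord i := by
    rw [AffineBasis.coord_reindex, Equiv.symm_swap, Equiv.swap_apply_right]
  rw [← coord_eq] at coord_X coord_Y
  wlog hlt : b.coord 1 X < b.coord 1 Y generalizing X Y
  · have coord_ne : b.coord 1 Y ≠ b.coord 1 X := fun coord_eq => hXY <| by
      rw [eq_add_coord_smul_sub b X, eq_add_coord_smul_sub b Y, coord_eq, coord_X, coord_Y]
    exact this Y hY X hX hXY.symm coord_X coord_Y (lt_of_le_of_ne (not_lt.1 hlt) coord_ne)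
  obtain ⟨Z, triangle_eq⟩ := exists_triple_eq hX hY hXY
  have hT' := affineIndependent_congr triangle_eq hT
  exact ⟨_, _, _, X, Y, Z, _, _, _, _, container_eq, triangle_eq,
    (h.congr triangle_eq container_eq).isFlush hT' coord_X coord_Y hlt⟩

end Flush

section OptimalFlush

variable {c q x y β γ τ xy xz yz : ℝ}

/-- The conditions `ExtensionBounds` for all labellings of a triangle with squared side lengths
`xy`, `xz`, `yz`; the fields are named after the order in which the vertices are taken. -/
structure OptimalBounds (τ xy xz yz : ℝ) : Prop where
  xyz : ExtensionBounds τ xy xz yz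
  xzy : ExtensionBounds τ xz xy yz
  yxz : ExtensionBounds τ xy yz xz
  yzx : ExtensionBounds τ yz xy xz
  zxy : ExtensionBounds τ xz yz xy
  zyx : ExtensionBounds τ yz xz xy

lemma OptimalBounds.swap (h : OptimalBounds τ xy xz yz) : OptimalBounds τ xy yz xz :=
  ⟨h.yxz, h.yzx, h.xyz, h.xzy, h.zyx, h.zxy⟩

/-- The squared length of `s • e + t • f` for vectors `e`, `f` with `⟪e, e⟫ = 1`, `⟪e, f⟫ = c` and
`⟪f, f⟫ = q`. -/
def frameSq (c q s t : ℝ) : ℝ := s ^ 2 + 2 * s * t * c + t ^ 2 * q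

/-- The necessary conditions for a triangle in the position `FlushCoords x y β γ` to have the
container `S P R` as a minimal one, where `c` and `q` are the inner products of `P - S` and `R - S`
and of `R - S` and itself, in units in which the side `SP` has length `1`. -/
structure OptimalFlush (c q x y β γ : ℝ) : Prop extends FlushCoords x y β γ where
  bounds : OptimalBounds ((y - x) * γ) ((y - x) ^ 2)
    (frameSq c q (β - x) γ) (frameSq c q (β - y) γ)

lemma OptimalFlush.reverse (h : OptimalFlush c q x y β γ) :
    OptimalFlush (1 - c) (q - 2 * c + 1) (1 - y) (1 - x) (1 - β - γ) γ where
  toFlushCoords := h.toFlushCoords.reverse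
  bounds := by
    have frameSq_reverse (s : ℝ) :
        frameSq (1 - c) (q - 2 * c + 1) (-(s + γ)) γ = frameSq c q s γ := by
      simp only [frameSq]
      ring
    convert h.bounds.swap using 1
    · ring
    · ring
    · rw [← frameSq_reverse]
      ring_nf
    · rw [← frameSq_reverse]
      ring_nf

section BaseFlush

lemma OptimalFlush.angle_shared_of_base_of_le (h : OptimalFlush (1 / 2) q x y β γ)
    (hle : frameSq (1 / 2) q (β - y) γ ≤ frameSq (1 / 2) q (β - x) γ) : x = 0 ∧ β = 0 := by
  obtain ⟨⟨x_nonneg, x_lt_y, _, β_nonneg, γ_pos, sum_le_one, -, -⟩, bounds⟩ := h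
  have bound := bounds.xzy.apex_snd hle
  have one_le : 1 ≤ γ * (2 * β + γ - 2 * x) := by
    refine le_of_mul_le_mul_left ?_ (pow_pos (sub_pos.2 x_lt_y) 2)
    simp only [frameSq] at bound
    linarith
  have γ_eq_one : γ = 1 := by nlinarith
  subst γ_eq_one
  constructor <;> linarith

lemma OptimalFlush.angle_shared_of_base (h : OptimalFlush (1 / 2) q x y β γ) :
    (x = 0 ∧ β = 0) ∨ (y = 1 ∧ β + γ = 1) := by
  rcases le_total (frameSq (1 / 2) q (β - y) γ) (frameSq (1 / 2) q (β - x) γ) with hle | hle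
  · exact .inl (h.angle_shared_of_base_of_le hle)
  · have h' : OptimalFlush (1 / 2) q (1 - y) (1 - x) (1 - β - γ) γ := by
      convert h.reverse using 1 <;> ring
    obtain ⟨hx, hβ⟩ := h'.angle_shared_of_base_of_le (by simp only [frameSq] at hle ⊢; linarith)
    exact .inr ⟨by linarith, by linarith⟩

end BaseFlush

section LegFlush

lemma frameSq_one_le_sq (hc : c ≤ 1) {s t : ℝ} (hs : 0 ≤ s) (ht : 0 ≤ t) :
    frameSq c 1 s t ≤ (s + t) ^ 2 := by
  have := mul_nonneg (mul_nonneg hs ht) (sub_nonneg.2 hc)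
  simp only [frameSq]
  linarith

/-- Otherwise, the isosceles extension of `XYZ` with `XZ` as a leg from the apex `X = S` would
be smaller. -/
lemma OptimalFlush.frameSq_lt_of_left (h : OptimalFlush c 1 0 y β γ) (hc : c ≤ 1) (hβ : 0 < β) :
    frameSq c 1 β γ < y ^ 2 := by
  obtain ⟨⟨-, y_pos, -, -, γ_pos, sum_le_one, -, -⟩, bounds⟩ := h
  by_contra! hle
  have bound := bounds.xzy.apex_fst (by simpa using hle)
  have frame_le : frameSq c 1 β γ ≤ 1 :=
    (frameSq_one_le_sq hc hβ.le γ_pos.le).trans (pow_le_one₀ (by linarith) sum_le_one)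
  have γ_sq_lt : γ ^ 2 < 1 := pow_lt_one₀ γ_pos.le (by linarith) two_ne_zero
  simp only [sub_zero] at bound
  have one_le : 1 ≤ γ ^ 2 * frameSq c 1 β γ :=
    le_of_mul_le_mul_left (by linarith) (pow_pos y_pos 2)
  nlinarith [pow_pos γ_pos 2]

lemma OptimalFlush.neg_of_left (h : OptimalFlush c 1 0 y β γ) (hc : c ≤ 1) (hβ : 0 < β) :
    c < 0 := by
  have bound := h.bounds.xyz.apex_fst (by simpa using (h.frameSq_lt_of_left hc hβ).le)
  obtain ⟨⟨-, y_pos, y_le_one, -, γ_pos, -, -, -⟩, -⟩ := h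
  have y_pow_le : γ ^ 2 * y ^ 4 ≤ γ ^ 2 :=
    mul_le_of_le_one_right (by positivity) (pow_le_one₀ y_pos.le y_le_one)
  simp only [frameSq, sub_zero] at bound
  have : β * (β + 2 * γ * c) ≤ 0 := by linarith
  by_contra! c_nonneg
  have : 0 < β * (β + 2 * γ * c) := by positivity
  linarith

lemma OptimalFlush.add_eq_one_of_left (h : OptimalFlush c 1 0 1 β γ) (hc : c ≤ 1) (hβ : 0 < β) :
    β + γ = 1 := by
  have c_neg := h.neg_of_left hc hβ
  have frame_lt := h.frameSq_lt_of_left hc hβ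
  have bound := h.bounds.yxz.apex_snd (by simpa using frame_lt.le)
  obtain ⟨⟨-, -, -, -, γ_pos, sum_le_one, -, -⟩, -⟩ := h
  refine sum_le_one.antisymm (not_lt.1 fun sum_lt => ?_)
  have γc_neg : γ * c < 0 := mul_neg_of_pos_of_neg γ_pos c_neg
  have product_pos : 0 < (1 - β - γ) * (1 - β - γ - 2 * (γ * c)) :=
    mul_pos (by linarith) (by linarith)
  simp only [frameSq] at bound
  linarith

lemma OptimalFlush.frameSq_lt_of_left_of_add_eq_one (h : OptimalFlush c 1 0 y (1 - γ) γ)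
    (hβ : 0 < 1 - γ) (c_neg : c < 0) :
    frameSq c 1 (1 - γ) γ < frameSq c 1 (1 - γ - y) γ := by
  by_contra! hle
  obtain ⟨⟨-, y_pos, -, -, γ_pos, -, -, -⟩, bounds⟩ := h
  have bound := bounds.xzy.apex_snd (by simpa using hle)
  have one_le : 1 ≤ 2 * γ * (1 - γ + γ * c) := by
    refine le_of_mul_le_mul_left ?_ (pow_pos y_pos 2)
    simp only [frameSq] at bound
    linarith
  nlinarith [sq_nonneg (2 * γ - 1), mul_pos γ_pos γ_pos]

lemma OptimalFlush.half_le_of_left (h : OptimalFlush c 1 0 y (1 - γ) γ) (hc : -1 ≤ c)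
    (hle : frameSq c 1 (1 - γ) γ ≤ frameSq c 1 (1 - γ - y) γ) : 1 / 2 ≤ γ := by
  obtain ⟨⟨-, y_pos, y_le_one, -, γ_pos, -, -, -⟩, bounds⟩ := h
  have bound := bounds.yzx.apex_snd (by simpa using hle)
  have one_le : 1 ≤ 2 * γ * (y - 1 + γ * (1 - c)) := by
    refine le_of_mul_le_mul_left ?_ (pow_pos y_pos 2)
    simp only [frameSq] at bound
    linarith
  by_contra! γ_le
  have : 2 * γ * (y - 1 + γ * (1 - c)) ≤ 2 * γ * (γ * 2) :=
    mul_le_mul_of_nonneg_left (by nlinarith) (by positivity)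
  nlinarith

lemma OptimalFlush.eq_one_of_left (h : OptimalFlush c 1 0 y β γ) (hc : |c| ≤ 1) (hβ : 0 < β)
    (hsum : β + γ = 1) : y = 1 := by
  obtain ⟨neg_one_le_c, c_le_one⟩ := abs_le.1 hc
  have c_neg := h.neg_of_left c_le_one hβ
  have frame_lt := h.frameSq_lt_of_left c_le_one hβ
  obtain rfl : β = 1 - γ := by linarith
  have half_le :=
    h.half_le_of_left neg_one_le_c (h.frameSq_lt_of_left_of_add_eq_one hβ c_neg).le
  obtain ⟨⟨-, y_pos, y_le_one, -, -, -, -, -⟩, bounds⟩ := h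
  refine y_le_one.antisymm (not_lt.1 fun y_lt_one => ?_)
  have bound := bounds.yxz.apex_snd (by simpa using frame_lt.le)
  have product_nonpos : (1 - y) *
      (2 * γ * y ^ 2 + (2 * γ ^ 2 * (1 - c) - 1) * y + 1 - 2 * γ * (1 - γ) * (1 - c)) ≤ 0 := by
    simp only [frameSq] at bound
    linarith
  have factor_ge : y ^ 2 + (1 + c) / 2 * (1 - y) ≤
      2 * γ * y ^ 2 + (2 * γ ^ 2 * (1 - c) - 1) * y + 1 - 2 * γ * (1 - γ) * (1 - c) := by
    have : 0 ≤ (2 * γ - 1) * y ^ 2 := mul_nonneg (by linarith) (sq_nonneg y)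
    have : 0 ≤ (1 - c) * y * (2 * γ ^ 2 - 1 / 2) :=
      mul_nonneg (mul_nonneg (by linarith) y_pos.le) (by nlinarith)
    have : 0 ≤ (1 - c) * (2 * (γ - 1 / 2) ^ 2) := mul_nonneg (by linarith) (by positivity)
    linarith
  have : 0 ≤ (1 + c) / 2 * (1 - y) := mul_nonneg (by linarith) (by linarith)
  nlinarith [pow_pos y_pos 2]

lemma OptimalFlush.eq_one_of_top (h : OptimalFlush c 1 x y 0 1) (hc : c ≤ 1) (hx : 0 < x) :
    y = 1 := by
  obtain ⟨⟨-, x_lt_y, y_le_one, -, -, -, -, -⟩, bounds⟩ := h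
  refine y_le_one.antisymm (not_lt.1 fun y_lt_one => ?_)
  have XY_le : (y - x) ^ 2 ≤ frameSq c 1 (0 - x) 1 := by
    have : (y - x) ^ 2 ≤ (1 - x) ^ 2 := pow_le_pow_left₀ (by linarith) (by linarith) 2
    have : 0 ≤ x * (1 - c) := mul_nonneg hx.le (by linarith)
    simp only [frameSq]
    linarith
  have bound_leg := bounds.xzy.apex_fst XY_le
  have bound_base := bounds.zxy.apex_snd XY_le
  have c_le : 2 * c ≤ x := by
    have one_le : 1 ≤ frameSq c 1 (0 - x) 1 :=
      le_of_mul_le_mul_left (by linarith) (pow_pos (sub_pos.2 x_lt_y) 2)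
    simp only [frameSq] at one_le
    refine le_of_mul_le_mul_left ?_ hx
    linarith
  have nonpos : (1 - y) ^ 2 - 2 * c * (y * (1 - y) + x ^ 2) + 2 * x * (1 - y ^ 2) +
      2 * x ^ 2 * y ≤ 0 := by
    simp only [frameSq] at bound_base
    linarith
  have y_pos : 0 < y := hx.trans x_lt_y
  have : 0 < 1 - y := by linarith
  have : 2 * c * (y * (1 - y) + x ^ 2) ≤ x * (y * (1 - y) + x ^ 2) :=
    mul_le_mul_of_nonneg_right c_le (by positivity)
  have : 0 < (1 - y) ^ 2 + x * (1 - y) * (2 + y) + x ^ 2 * (2 * y - x) :=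
    add_pos (by positivity) (mul_pos (by positivity) (by linarith))
  linarith

lemma OptimalFlush.frameSq_sub_lt_of_side (h : OptimalFlush c 1 x 1 0 γ) (hc : c ≤ 1) (hγ : γ < 1) :
    frameSq c 1 (0 - x) γ < (1 - x) ^ 2 := by
  by_contra! hle
  obtain ⟨⟨-, x_lt_one, -, -, γ_pos, -, -, -⟩, bounds⟩ := h
  have bound := bounds.yzx.apex_trd hle
  have le_cubic : 2 * (1 - γ * c) ≤ γ * frameSq c 1 (0 - 1) γ := by
    refine le_of_mul_le_mul_left ?_ (sub_pos.2 x_lt_one)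
    simp only [frameSq] at bound ⊢
    linarith
  have product_nonpos : (1 - γ) * (2 + γ + γ ^ 2 - 2 * (γ * c)) ≤ 0 := by
    simp only [frameSq] at le_cubic
    linarith
  have : γ * c ≤ γ := mul_le_of_le_one_right γ_pos.le hc
  have : 0 < (1 - γ) * (2 + γ + γ ^ 2 - 2 * (γ * c)) :=
    mul_pos (by linarith) (by linarith [pow_pos γ_pos 2])
  linarith

lemma OptimalFlush.frameSq_sub_one_lt_of_side (h : OptimalFlush c 1 x 1 0 γ) (hc : c ≤ 1)
    (hx : 0 < x) (hγ : γ < 1) : frameSq c 1 (0 - 1) γ < (1 - x) ^ 2 := by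
  by_contra! hle
  have XZ_le := h.bounds.xyz.apex_fst (h.frameSq_sub_lt_of_side hc hγ).le
  have bound := h.bounds.yzx.apex_fst hle
  obtain ⟨⟨-, x_lt_one, -, -, γ_pos, -, -, -⟩, -⟩ := h
  have one_le : 1 ≤ γ ^ 2 * frameSq c 1 (0 - 1) γ := by
    refine le_of_mul_le_mul_left ?_ (pow_pos (sub_pos.2 x_lt_one) 2)
    linarith
  have γ_sq_lt : γ ^ 2 < 1 := pow_lt_one₀ γ_pos.le hγ two_ne_zero
  have two_mul_lt : 2 * (γ * c) < γ ^ 2 := by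
    simp only [frameSq] at one_le
    nlinarith
  have : (1 - x) ^ 4 ≤ 1 - x := pow_le_of_le_one (by linarith) (by linarith) four_ne_zero
  simp only [frameSq] at XZ_le
  nlinarith [mul_pos hx hx, mul_pos hx (sub_pos.2 two_mul_lt), pow_pos γ_pos 2]

lemma OptimalFlush.frameSq_sub_one_lt_frameSq_sub_of_side (h : OptimalFlush c 1 x 1 0 γ)
    (hc : c ≤ 1) (hx : 0 < x) (hγ : γ < 1) :
    frameSq c 1 (0 - 1) γ < frameSq c 1 (0 - x) γ := by
  by_contra! hle
  have bound := h.bounds.yzx.apex_snd hle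
  have YZ_le := h.bounds.yxz.apex_fst (h.frameSq_sub_one_lt_of_side hc hx hγ).le
  obtain ⟨⟨-, x_lt_one, -, -, γ_pos, -, -, -⟩, -⟩ := h
  have γc_le : γ * c ≤ γ := mul_le_of_le_one_right γ_pos.le hc
  have one_le : 1 ≤ 2 * γ * (1 - γ * c) := by
    refine le_of_mul_le_mul_left ?_ (pow_pos (sub_pos.2 x_lt_one) 2)
    simp only [frameSq] at bound
    linarith
  have one_lt : 1 < 2 * (γ * c) := by
    have : (1 - x) ^ 4 ≤ 1 := pow_le_one₀ (by linarith) (by linarith)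
    simp only [frameSq] at YZ_le
    nlinarith [pow_pos γ_pos 2]
  nlinarith

lemma OptimalFlush.eq_one_of_side (h : OptimalFlush c 1 x 1 0 γ) (hc : c ≤ 1) (hx : 0 < x) :
    γ = 1 := by
  have γ_le_one : γ ≤ 1 := by simpa using h.β_add_γ_le_one
  refine γ_le_one.antisymm (not_lt.1 fun γ_lt_one => ?_)
  have XZ_le := h.bounds.xyz.apex_fst (h.frameSq_sub_lt_of_side hc γ_lt_one).le
  have YZ_lt_XZ := h.frameSq_sub_one_lt_frameSq_sub_of_side hc hx γ_lt_one
  obtain ⟨⟨-, x_lt_one, -, -, γ_pos, -, -, -⟩, -⟩ := h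
  have le_γc : 1 + x ≤ 2 * (γ * c) := by
    refine le_of_mul_le_mul_left ?_ (sub_pos.2 x_lt_one)
    simp only [frameSq] at YZ_lt_XZ
    linarith
  have sq_le : (γ - x) ^ 2 ≤ ((1 - x) ^ 2 * γ) ^ 2 := by
    have : γ * c ≤ γ := mul_le_of_le_one_right γ_pos.le hc
    simp only [frameSq] at XZ_le
    nlinarith
  have sub_le : γ - x ≤ (1 - x) ^ 2 * γ := le_of_sq_le_sq sq_le (by positivity)
  have le_one : γ * (2 - x) ≤ 1 := by
    refine le_of_mul_le_mul_left ?_ hx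
    linarith
  nlinarith

lemma OptimalFlush.angle_shared_of_leg (h : OptimalFlush c 1 x y β γ) (hc : |c| ≤ 1) :
    (x = 0 ∧ β = 0) ∨ (y = 1 ∧ β + γ = 1) := by
  have c_le_one := (abs_le.1 hc).2
  rcases h.x_nonneg.eq_or_lt with rfl | hx
  · rcases h.β_nonneg.eq_or_lt with rfl | hβ
    · exact .inl ⟨rfl, rfl⟩
    · rcases h.touches_right with rfl | hsum
      · exact .inr ⟨rfl, h.add_eq_one_of_left c_le_one hβ⟩
      · exact .inr ⟨h.eq_one_of_left hc hβ hsum, hsum⟩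
  · obtain rfl : β = 0 := h.touches_left.resolve_left hx.ne'
    rcases h.touches_right with rfl | hsum
    · exact .inr ⟨rfl, by simpa using h.eq_one_of_side c_le_one hx⟩
    · obtain rfl : γ = 1 := by simpa using hsum
      exact .inr ⟨h.eq_one_of_top c_le_one hx, hsum⟩

end LegFlush

end OptimalFlush

section Sharing

variable {A B C S P R X Y Z : Pt} {x y β γ : ℝ}

lemma IsMinIsoscelesContainer.optimalBounds (h : IsMinIsoscelesContainer X Y Z S P R)
    (hT : AffineIndependent ℝ ![X, Y, Z]) :
    OptimalBounds (triArea X Y Z / triArea S P R)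
      (dist X Y ^ 2) (dist X Z ^ 2) (dist Y Z ^ 2) := by
  have bounds {X' Y' Z' : Pt} (heq : ({X, Y, Z} : Set Pt) = {X', Y', Z'}) :
      ExtensionBounds (triArea X Y Z / triArea S P R)
        (dist X' Y' ^ 2) (dist X' Z' ^ 2) (dist Y' Z' ^ 2) := by
    rw [triArea_congr heq]
    exact (h.congr heq rfl).extensionBounds (affineIndependent_congr heq hT)
  constructor
  · exact bounds rfl
  · simpa only [dist_comm] using bounds (X' := X) (Y' := Z) (Z' := Y) (by grind)
  · simpa only [dist_comm] using bounds (X' := Y) (Y' := X) (Z' := Z) (by grind)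
  · simpa only [dist_comm] using bounds (X' := Y) (Y' := Z) (Z' := X) (by grind)
  · simpa only [dist_comm] using bounds (X' := Z) (Y' := X) (Z' := Y) (by grind)
  · simpa only [dist_comm] using bounds (X' := Z) (Y' := Y) (Z' := X) (by grind)

lemma dist_sq_mul_frameSq (hSP : S ≠ P) (R : Pt) (x β γ : ℝ) :
    dist S P ^ 2 *
        frameSq (inner ℝ (P - S) (R - S) / dist S P ^ 2) (dist S R ^ 2 / dist S P ^ 2) (β - x) γ =
      dist (S + x • (P - S)) (S + β • (P - S) + γ • (R - S)) ^ 2 := by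
  have SP_ne : dist S P ≠ 0 := dist_ne_zero.2 hSP
  have difference : S + β • (P - S) + γ • (R - S) - (S + x • (P - S)) =
      (β - x) • (P - S) + γ • (R - S) := by module
  rw [dist_eq_norm' (S + x • (P - S)), difference, norm_add_sq_real, norm_smul, norm_smul,
    real_inner_smul_left, real_inner_smul_right, mul_pow, mul_pow, ← dist_eq_norm' S P,
    ← dist_eq_norm' S R, norm_eq_abs, norm_eq_abs, sq_abs, sq_abs, frameSq]
  field_simp

lemma IsFlush.optimalFlush (hflush : IsFlush S P R X Y Z x y β γ)
    (h : IsMinIsoscelesContainer X Y Z S P R) (hT : AffineIndependent ℝ ![X, Y, Z]) :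
    OptimalFlush (inner ℝ (P - S) (R - S) / dist S P ^ 2) (dist S R ^ 2 / dist S P ^ 2)
      x y β γ where
  toFlushCoords := hflush.toFlushCoords
  bounds := by
    have hSP := (ne_of_affineIndependent_three h.1.1).1
    have SP_sq_pos : 0 < dist S P ^ 2 := pow_pos (dist_pos.2 hSP) 2
    have container_area_pos := affineIndependent_iff_triArea_pos.1 h.1.1
    have area_ratio : triArea X Y Z / triArea S P R = (y - x) * γ := by
      rw [hflush.fst_eq, hflush.snd_eq, hflush.trd_eq, triArea_frame,
        mul_div_cancel_right₀ _ container_area_pos.ne',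
        abs_of_pos (mul_pos (sub_pos.2 hflush.x_lt_y) hflush.γ_pos)]
    have XY_sq : dist X Y ^ 2 = dist S P ^ 2 * (y - x) ^ 2 := by
      rw [hflush.fst_eq, hflush.snd_eq, dist_add_left, dist_eq_norm', ← sub_smul, norm_smul,
        ← dist_eq_norm' S P, mul_pow, norm_eq_abs, sq_abs, mul_comm]
    have bounds := h.optimalBounds hT
    rw [area_ratio, XY_sq, hflush.fst_eq, hflush.snd_eq, hflush.trd_eq,
      ← dist_sq_mul_frameSq hSP, ← dist_sq_mul_frameSq hSP] at bounds
    exact ⟨bounds.xyz.of_mul SP_sq_pos, bounds.xzy.of_mul SP_sq_pos, bounds.yxz.of_mul SP_sq_pos,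
      bounds.yzx.of_mul SP_sq_pos, bounds.zxy.of_mul SP_sq_pos, bounds.zyx.of_mul SP_sq_pos⟩

lemma IsFlush.angle_shared_of_dist_eq (hflush : IsFlush S P R X Y Z x y β γ)
    (h : IsMinIsoscelesContainer X Y Z S P R) (hT : AffineIndependent ℝ ![X, Y, Z])
    (hleg : dist S R = dist S P) : (x = 0 ∧ β = 0) ∨ (y = 1 ∧ β + γ = 1) := by
  have SP_pos : 0 < dist S P := dist_pos.2 (ne_of_affineIndependent_three h.1.1).1
  have optimal := hflush.optimalFlush h hT
  rw [hleg, div_self (pow_pos SP_pos 2).ne'] at optimal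
  refine optimal.angle_shared_of_leg ?_
  have cauchy_schwarz := abs_real_inner_le_norm (P - S) (R - S)
  rw [← dist_eq_norm' S P, ← dist_eq_norm' S R, hleg, ← sq] at cauchy_schwarz
  rw [abs_div, abs_of_pos (pow_pos SP_pos 2)]
  exact div_le_one_of_le₀ cauchy_schwarz (sq_nonneg _)

lemma IsFlush.angle_shared (hflush : IsFlush S P R X Y Z x y β γ)
    (h : IsMinIsoscelesContainer X Y Z S P R) (hT : AffineIndependent ℝ ![X, Y, Z]) :
    (x = 0 ∧ β = 0) ∨ (y = 1 ∧ β + γ = 1) := by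
  rcases h.1.2.1 with apex_R | apex_S | apex_P
  · have hSP := (ne_of_affineIndependent_three h.1.1).1
    have SP_sq_pos : 0 < dist S P ^ 2 := pow_pos (dist_pos.2 hSP) 2
    have inner_eq : inner ℝ (P - S) (R - S) / dist S P ^ 2 = 1 / 2 := by
      rw [real_inner_eq_norm_mul_self_add_norm_mul_self_sub_norm_sub_mul_self_div_two,
        sub_sub_sub_cancel_right, ← dist_eq_norm' S P, ← dist_eq_norm' S R, ← dist_eq_norm P R,
        apex_R, dist_comm R S, add_sub_cancel_right, ← sq, div_right_comm,
        div_self SP_sq_pos.ne']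
    have optimal := hflush.optimalFlush h hT
    rw [inner_eq] at optimal
    exact optimal.angle_shared_of_base
  · exact hflush.angle_shared_of_dist_eq h hT (by rw [dist_comm, apex_S])
  · have reversed := hflush.reverse.angle_shared_of_dist_eq
      (h.congr (Set.insert_comm X Y _) (Set.insert_comm S P _))
      (affineIndependent_congr (Set.insert_comm X Y _) hT) (by rw [← apex_P, dist_comm])
    rcases reversed with ⟨hy, hsum⟩ | ⟨hx, hβ⟩
    · exact .inr ⟨by linarith, by linarith⟩
    · exact .inl ⟨by linarith, by linarith⟩

/-- `T` and `K` are the vertex sets of two triangles such that `K` arises from `T` by extending one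
side of `T` beyond one of its ends, so that the triangles have another side and the angle between
the two sides in common. -/
def SharesSideAndAngle (T K : Set Pt) : Prop :=
  ∃ (X Y Z : Pt) (r : ℝ), T = {X, Y, Z} ∧ 1 ≤ r ∧ K = {X, Y, X + r • (Z - X)}

lemma sharesSideAndAngle_of_contraction (X Y Z : Pt) {t : ℝ} (t_pos : 0 < t) (t_le_one : t ≤ 1) :
    SharesSideAndAngle {X, Y, X + t • (Z - X)} {X, Y, Z} :=
  ⟨X, Y, X + t • (Z - X), t⁻¹, rfl, (one_le_inv₀ t_pos).2 t_le_one, by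
    rw [add_sub_cancel_left, inv_smul_smul₀ t_pos.ne', add_sub_cancel]⟩

lemma IsFlush.sharesSideAndAngle_of_left (h : IsFlush S P R X Y Z 0 y 0 γ) :
    SharesSideAndAngle {X, Y, Z} {S, P, R} := by
  obtain ⟨⟨-, y_pos, y_le_one, -, γ_pos, γ_le_one, -, right⟩, rfl, rfl, rfl⟩ := h
  simp only [zero_smul, add_zero, zero_add] at right γ_le_one ⊢
  rcases right with rfl | rfl
  · simpa using sharesSideAndAngle_of_contraction S P R γ_pos γ_le_one
  · simpa [Set.pair_comm] using sharesSideAndAngle_of_contraction S R P y_pos y_le_one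

theorem IsMinIsoscelesContainer.sharesSideAndAngle (h : IsMinIsoscelesContainer A B C S P R)
    (hT : AffineIndependent ℝ ![A, B, C]) : SharesSideAndAngle {A, B, C} {S, P, R} := by
  obtain ⟨S', P', R', X, Y, Z, x, y, β, γ, container_eq, triangle_eq, hflush⟩ :=
    h.exists_isFlush hT
  have hT' := affineIndependent_congr triangle_eq hT
  rw [container_eq, triangle_eq]
  rcases hflush.angle_shared (h.congr triangle_eq container_eq) hT' with ⟨rfl, rfl⟩ | ⟨rfl, hsum⟩
  · exact hflush.sharesSideAndAngle_of_left
  · have reversed : IsFlush P' S' R' Y X Z 0 (1 - x) 0 γ := by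
      convert hflush.reverse using 1 <;> linarith
    rw [Set.insert_comm X, Set.insert_comm S']
    exact reversed.sharesSideAndAngle_of_left

end Sharing

section Classification

variable {A B C S P R X Y Z U V W : Pt} {r : ℝ}

lemma IsMinIsoscelesContainer.extensionBounds_inv
    (h : IsMinIsoscelesContainer X Y Z X Y (X + r • (Z - X))) (hT : AffineIndependent ℝ ![X, Y, Z])
    (hr : 0 < r) (hUVW : ({X, Y, Z} : Set Pt) = {U, V, W}) :
    ExtensionBounds r⁻¹ (dist U V ^ 2) (dist U W ^ 2) (dist V W ^ 2) := by
  have area_pos := affineIndependent_iff_triArea_pos.1 hT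
  have area_ratio : triArea U V W / triArea X Y (X + r • (Z - X)) = r⁻¹ := by
    rw [triArea_add_smul_sub, abs_of_pos hr, ← triArea_congr hUVW]
    field_simp
  exact area_ratio ▸ (h.congr hUVW rfl).extensionBounds (affineIndependent_congr hUVW hT)

lemma IsMinIsoscelesContainer.mul_dist_le
    (h : IsMinIsoscelesContainer X Y Z X Y (X + r • (Z - X))) (hT : AffineIndependent ℝ ![X, Y, Z])
    (hr : 0 < r) (hUVW : ({X, Y, Z} : Set Pt) = {U, V, W}) (hle : dist U W ≤ dist U V) :
    r * dist U W ≤ dist U V := by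
  have bound := (h.extensionBounds_inv hT hr hUVW).apex_fst
    (pow_le_pow_left₀ dist_nonneg hle 2)
  rwa [← mul_pow, sq_le_sq₀ dist_nonneg (by positivity), le_inv_mul_iff₀ hr] at bound

/-- Extending `YX` beyond `X` to an isosceles triangle with apex `Z` costs no more area than
extending `XZ` beyond `Z` to one with base `XY`, and strictly less if `XYZ` is not isosceles. -/
lemma IsMinIsoscelesContainer.dist_eq_of_apex_trd
    (h : IsMinIsoscelesContainer X Y Z X Y (X + r • (Z - X))) (hT : AffineIndependent ℝ ![X, Y, Z])
    (hr : 1 ≤ r)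
    (hapex : dist X Y ^ 2 = r * (dist X Y ^ 2 + dist X Z ^ 2 - dist Y Z ^ 2)) :
    dist X Z = dist Y Z := by
  have r_pos : 0 < r := by linarith
  have le_sq : dist X Z ^ 2 ≤ dist Y Z ^ 2 := by
    nlinarith [sq_nonneg (dist X Y)]
  have bound := (h.extensionBounds_inv (U := Y) (V := Z) (W := X) hT r_pos (by grind)).apex_snd
    (by simpa only [dist_comm] using le_sq)
  rw [le_inv_mul_iff₀ r_pos, dist_comm Y X, dist_comm Z X] at bound
  rw [← sq_eq_sq₀ dist_nonneg dist_nonneg]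
  refine le_sq.antisymm (not_lt.1 fun lt_sq => ?_)
  rcases hr.eq_or_lt with rfl | one_lt
  · linarith
  · linarith [mul_pos (sub_pos.2 one_lt) (sub_pos.2 lt_sq)]

lemma IsMinIsoscelesContainer.vertices_eq_of_apex_fst
    (h : IsMinIsoscelesContainer X Y Z X Y (X + r • (Z - X))) (hT : AffineIndependent ℝ ![X, Y, Z])
    (hr : 1 ≤ r) (hapex : r * dist X Z = dist X Y) (hABC : ({X, Y, Z} : Set Pt) = {A, B, C})
    (hab : dist B C < dist C A) (hbc : dist C A < dist A B) :
    ({X, Y, X + r • (Z - X)} : Set Pt) = {C, A, C + (dist C A / dist B C) • (B - C)} ∨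
      ({X, Y, X + r • (Z - X)} : Set Pt) = {A, B, A + (dist A B / dist C A) • (C - A)} := by
  obtain ⟨hXY, hXZ, hYZ⟩ := ne_of_affineIndependent_three hT
  have bound := h.mul_dist_le (U := C) (V := A) (W := B) hT (by linarith) (hABC.trans (by grind))
    (by rw [dist_comm C B]; exact hab.le)
  rw [dist_comm C B] at bound
  have r_eq : r = dist X Y / dist X Z := by
    rw [← hapex, mul_div_cancel_right₀ _ (dist_ne_zero.2 hXZ)]
  have XZ_le : dist X Z ≤ dist X Y := hapex ▸ le_mul_of_one_le_left dist_nonneg hr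
  have BA_eq := dist_comm B A
  have AC_eq := dist_comm A C
  have CB_eq := dist_comm C B
  rcases eq_relabelling_of_triple_eq hXY hXZ hYZ hABC with
    ⟨rfl, rfl, rfl⟩ | ⟨rfl, rfl, rfl⟩ | ⟨rfl, rfl, rfl⟩ | ⟨rfl, rfl, rfl⟩ | ⟨rfl, rfl, rfl⟩ |
    ⟨rfl, rfl, rfl⟩
  · exact .inr (by rw [r_eq, AC_eq])
  · linarith
  · linarith
  · exact .inl (by rw [r_eq, CB_eq])
  · linarith
  · linarith

lemma IsMinIsoscelesContainer.vertices_eq_of_apex_snd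
    (h : IsMinIsoscelesContainer X Y Z X Y (X + r • (Z - X))) (hT : AffineIndependent ℝ ![X, Y, Z])
    (hr : 1 ≤ r) (hapex : r * dist X Z ^ 2 = dist X Y ^ 2 + dist X Z ^ 2 - dist Y Z ^ 2)
    (hABC : ({X, Y, Z} : Set Pt) = {A, B, C})
    (hab : dist B C < dist C A) (hbc : dist C A < dist A B) :
    ({X, Y, X + r • (Z - X)} : Set Pt) =
      {A, C, A + ((dist C A ^ 2 + dist A B ^ 2 - dist B C ^ 2) / dist A B ^ 2) • (B - A)} := by
  obtain ⟨hXY, hXZ, hYZ⟩ := ne_of_affineIndependent_three hT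
  have bound : r * dist C A ≤ dist A B := by
    simpa only [dist_comm] using h.mul_dist_le (U := A) (V := B) (W := C) hT (by linarith)
      hABC (by rw [dist_comm A C]; exact hbc.le)
  have r_eq : r = (dist X Y ^ 2 + dist X Z ^ 2 - dist Y Z ^ 2) / dist X Z ^ 2 := by
    rw [← hapex, mul_div_cancel_right₀ _ (pow_ne_zero 2 (dist_ne_zero.2 hXZ))]
  have YZ_le : dist Y Z ≤ dist X Y := by
    rw [← sq_le_sq₀ dist_nonneg dist_nonneg]
    nlinarith [sq_nonneg (dist X Z)]
  have BA_eq := dist_comm B A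
  have AC_eq := dist_comm A C
  have CB_eq := dist_comm C B
  have BC_nonneg := dist_nonneg (x := B) (y := C)
  rcases eq_relabelling_of_triple_eq hXY hXZ hYZ hABC with
    ⟨rfl, rfl, rfl⟩ | ⟨rfl, rfl, rfl⟩ | ⟨rfl, rfl, rfl⟩ | ⟨rfl, rfl, rfl⟩ | ⟨rfl, rfl, rfl⟩ |
    ⟨rfl, rfl, rfl⟩
  · rw [AC_eq] at hapex
    nlinarith
  · rw [r_eq, AC_eq, CB_eq]
  · rw [BA_eq, AC_eq] at hapex
    have sq_lt : dist B C ^ 2 < dist C A * (dist A B + dist C A) := by nlinarith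
    nlinarith [mul_pos (sub_pos.2 hbc) (sub_pos.2 sq_lt),
      mul_le_mul_of_nonneg_left bound (sq_nonneg (dist B C))]
  · linarith
  · linarith
  · linarith

theorem IsMinIsoscelesContainer.vertices_eq (h : IsMinIsoscelesContainer A B C S P R)
    (hT : AffineIndependent ℝ ![A, B, C]) (hab : dist B C < dist C A) (hbc : dist C A < dist A B) :
    ({S, P, R} : Set Pt) = {C, A, C + (dist C A / dist B C) • (B - C)} ∨
      ({S, P, R} : Set Pt) = {A, B, A + (dist A B / dist C A) • (C - A)} ∨
      ({S, P, R} : Set Pt) =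
        {A, C, A + ((dist C A ^ 2 + dist A B ^ 2 - dist B C ^ 2) / dist A B ^ 2) • (B - A)} := by
  obtain ⟨X, Y, Z, r, hXYZ, hr, hK⟩ := h.sharesSideAndAngle hT
  have hT' := affineIndependent_congr hXYZ hT
  have h' := h.congr hXYZ hK
  rw [hK]
  rcases (isIsosceles_extension_iff X Y Z (by linarith)).1 h'.1.2.1 with apex | apex | apex
  · exact (h'.vertices_eq_of_apex_fst hT' hr apex hXYZ.symm hab hbc).imp_right .inl
  · exact .inr (.inr (h'.vertices_eq_of_apex_snd hT' hr apex hXYZ.symm hab hbc))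
  · have not_scalene := h'.dist_eq_of_apex_trd hT' hr apex
    obtain ⟨hAB, hAC, hBC⟩ := ne_of_affineIndependent_three hT
    rcases eq_relabelling_of_triple_eq hAB hAC hBC hXYZ with
      ⟨rfl, rfl, rfl⟩ | ⟨rfl, rfl, rfl⟩ | ⟨rfl, rfl, rfl⟩ | ⟨rfl, rfl, rfl⟩ | ⟨rfl, rfl, rfl⟩ |
      ⟨rfl, rfl, rfl⟩ <;> grind [dist_comm]

lemma OnRay.eq_add_smul_sub (h : OnRay X Y Z) (hne : X ≠ Y) :
    Z = X + (dist X Z / dist X Y) • (Y - X) := by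
  obtain ⟨r, r_nonneg, hr⟩ := SameRay.exists_nonneg_left h (sub_ne_zero.2 hne.symm)
  obtain rfl : Z = X + r • (Y - X) := by rw [hr, add_sub_cancel]
  rw [dist_add_smul_sub X Y r_nonneg, mul_div_cancel_right₀ _ (dist_ne_zero.2 hne)]

lemma OnRay.eq_add_smul_sub_of_dist_eq (h : OnRay X Y Z) (hne : X ≠ Y) (hZ : Z ≠ X)
    (hdist : dist Z W = dist W X) :
    Z = X + ((dist W X ^ 2 + dist X Y ^ 2 - dist Y W ^ 2) / dist X Y ^ 2) • (Y - X) := by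
  have Z_eq := h.eq_add_smul_sub hne
  set r := dist X Z / dist X Y
  have r_pos : 0 < r := div_pos (dist_pos.2 hZ.symm) (dist_pos.2 hne)
  have stewart := dist_sq_add_smul_sub X W Y r
  rw [← Z_eq, dist_comm W Z, hdist, dist_comm X W, dist_comm W Y] at stewart
  have r_mul : r * dist X Y ^ 2 = dist W X ^ 2 + dist X Y ^ 2 - dist Y W ^ 2 :=
    mul_left_cancel₀ r_pos.ne' (by linarith)
  rwa [← r_mul, mul_div_cancel_right₀ _ (pow_ne_zero 2 (dist_ne_zero.2 hne))]

end Classification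

/-- every minimum area isosceles container of a triangle `A B C`
with side lengths `a < b < c` equals (as a convex set) one of the three
triangles `AB'C`, `ABC'`, `AB₁C`; in particular there are at most `3` distinct
minimum area isosceles containers, each a special container of the first or
second kind. -/
theorem statement4 (A B C B' C' B₁ : Pt)
    (hABC : AffineIndependent ℝ ![A, B, C])
    (hab : dist B C < dist C A) (hbc : dist C A < dist A B)
    (hB'ray : OnRay C B B') (hB'dist : dist C B' = dist C A)
    (hC'ray : OnRay A C C') (hC'dist : dist A C' = dist A B)
    (hB₁ray : OnRay A B B₁) (hB₁ne : B₁ ≠ A) (hB₁dist : dist B₁ C = dist C A) :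
    ∀ S P R : Pt, IsMinIsoscelesContainer A B C S P R →
      tri S P R = tri A B' C ∨ tri S P R = tri A B C' ∨
        tri S P R = tri A B₁ C := by
  intro S P R h
  obtain ⟨hAB, hAC, hBC⟩ := ne_of_affineIndependent_three hABC
  have B'_eq := hB'ray.eq_add_smul_sub hBC.symm
  have C'_eq := hC'ray.eq_add_smul_sub hAC
  have B₁_eq := hB₁ray.eq_add_smul_sub_of_dist_eq hAB hB₁ne hB₁dist
  rw [hB'dist, dist_comm C B] at B'_eq
  rw [hC'dist, dist_comm A C] at C'_eq
  have vertices := h.vertices_eq hABC hab hbc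
  rw [← B'_eq, ← C'_eq, ← B₁_eq] at vertices
  simp only [tri]
  rcases vertices with vertices | vertices | vertices
  · exact .inl (congrArg _ (vertices.trans (by grind)))
  · exact .inr (.inl (congrArg _ vertices))
  · exact .inr (.inr (congrArg _ (vertices.trans (by grind))))
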